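/- Let p be a prime, q = 1/p, and let k ≥ 0 and μ ≥ 1 be integers. Set s = ⌊(μ−1)/2⌋. Then P(2k+1, p^μ) = (Π_{2k+1}(q) / ((1−q)·Π_k(q²))) · (T_3(k,s) − q^μ·T_1(k,s)). -/

import Mathlib

/-- Number of symmetric `n × n` matrices over `ZMod m` with nonzero determinant. -/
noncomputable def Nsym (n m : ℕ) : ℕ :=
  Nat.card {A : Matrix (Fin n) (Fin n) (ZMod m) // A.IsSymm ∧ A.det ≠ 0}

/-- Proportion of symmetric `n × n` matrices over `ZMod m` with nonzero determinant. -/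
noncomputable def Psym (n m : ℕ) : ℝ :=
  (Nsym n m : ℝ) / (m : ℝ) ^ (n * (n + 1) / 2)

/-- `Π_n(t) = ∏_{j=1}^n (1 - t^j)`. -/
noncomputable def PiProd (n : ℕ) (t : ℝ) : ℝ :=
  ∏ j ∈ Finset.range n, (1 - t ^ (j + 1))

/-- `T_β(k,s)`: equal to `1` if `k = 0`, and to
`∑_{j=0}^{s} q^{βj} · Π_{k+j−1}(q²) / (Π_j(q²) · Π_{k−1}(q²))` if `k ≥ 1`. -/
noncomputable def T (q : ℝ) (β k s : ℕ) : ℝ :=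
  if k = 0 then 1
  else ∑ j ∈ Finset.range (s + 1),
    q ^ (β * j) * PiProd (k + j - 1) (q ^ 2) / (PiProd j (q ^ 2) * PiProd (k - 1) (q ^ 2))

/-!
Eliminate the rows of a random symmetric `n × n` matrix over `ZMod (p ^ μ)` one at a time, with a
unit diagonal entry or a `2 × 2` block as pivot. What remains is `p` times a random symmetric
`j × j` matrix, where `j` is the corank modulo `p`, so that `P(n, p^μ) = ∑_j c(n, j) P(j, p^(μ-j))`
with `c(n, ·)` the distribution of the corank over the field with `p` elements. For `n = 2k + 1`
the even sizes can be eliminated from this recurrence: with `g_k(μ)` the quotient of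
`P(2k + 1, p^μ)` by `Π_{2k+1}(q) / ((1 - q) Π_k(q²))`, and Gaussian binomials in `q²`,
`g_k(μ) = ∑_i [k, i] q^(i(2i+1)) g_i(μ - 2i)`. The two Pascal rules reduce it to
`g_{k+1}(μ) = g_k(μ) + q^(2k+3) g_{k+1}(μ - 2)`, which `T_3(k, s) - q^μ T_1(k, s)` also satisfies.
-/

section UniformProbability

variable {α β : Type*}

/-- The probability that a uniformly distributed element of the finite type `α` satisfies `P`. -/
noncomputable def unifProb (P : α → Prop) : ℝ := (Nat.card {x // P x} : ℝ) / Nat.card α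

lemma unifProb_comp_equiv (e : α ≃ β) (P : β → Prop) :
    unifProb (fun a => P (e a)) = unifProb P := by
  rw [unifProb, unifProb, Nat.card_congr e,
    Nat.card_congr (e.subtypeEquiv (p := fun a => P (e a)) fun _ => Iff.rfl)]

lemma unifProb_of_forall [Finite α] [Nonempty α] {P : α → Prop} (h : ∀ x, P x) :
    unifProb P = 1 := by
  rw [unifProb, Nat.card_congr (Equiv.subtypeUnivEquiv h),
    div_self (Nat.cast_ne_zero.2 Nat.card_pos.ne')]

lemma unifProb_and_add_and_not [Finite α] (S P : α → Prop) :
    unifProb (fun x => S x ∧ P x) + unifProb (fun x => ¬ S x ∧ P x) = unifProb P := by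
  classical
  rw [unifProb, unifProb, unifProb, ← add_div, ← Nat.cast_add, ← Nat.card_sum]
  congr 2
  have inter (S' : α → Prop) : {x // S' x ∧ P x} ≃ {x : {x // P x} // S' x} :=
    (Equiv.subtypeEquivRight fun _ => and_comm).trans
      (Equiv.subtypeSubtypeEquivSubtypeInter P S').symm
  exact Nat.card_congr (((inter S).sumCongr (inter fun x => ¬ S x)).trans
    (Equiv.sumCompl fun x : {x // P x} => S x))

lemma unifProb_not [Finite α] [Nonempty α] (P : α → Prop) :
    unifProb (fun x => ¬ P x) = 1 - unifProb P := by
  have h := unifProb_and_add_and_not P fun _ => True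
  simp only [and_true] at h
  rw [unifProb_of_forall fun _ => trivial] at h
  exact eq_sub_of_add_eq' h

lemma unifProb_and_eq_mul [Finite α] (S P : α → Prop) :
    unifProb (fun x => S x ∧ P x) = unifProb S * unifProb fun x : {x // S x} => P x := by
  have hcard : Nat.card {x // S x ∧ P x} = Nat.card {x : {x // S x} // P x} :=
    Nat.card_congr (Equiv.subtypeSubtypeEquivSubtypeInter S P).symm
  rcases isEmpty_or_nonempty {x // S x} with _ | _
  · simp [unifProb, hcard]
  · have hS : (Nat.card {x // S x} : ℝ) ≠ 0 := Nat.cast_ne_zero.2 Nat.card_pos.ne'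
    rw [unifProb, unifProb, unifProb, hcard]
    field_simp

lemma unifProb_prod_of_forall [Finite α] [Finite β] {S : α → Prop} {P : α → β → Prop} {x : ℝ}
    (h : ∀ a, S a → unifProb (P a) = x) :
    unifProb (fun c : α × β => S c.1 ∧ P c.1 c.2) = unifProb S * x := by
  have := Fintype.ofFinite {a // S a}
  rcases isEmpty_or_nonempty β with _ | _
  · by_cases hS : ∃ a, S a
    · obtain ⟨a, ha⟩ := hS
      simp [unifProb, ← h a ha]
    · simp [unifProb, not_exists.1 hS]
  have hβ : (Nat.card β : ℝ) ≠ 0 := Nat.cast_ne_zero.2 Nat.card_pos.ne'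
  let e : {c : α × β // S c.1 ∧ P c.1 c.2} ≃ Σ a : {a // S a}, {b // P a b} :=
    { toFun := fun c => ⟨⟨c.1.1, c.2.1⟩, c.1.2, c.2.2⟩
      invFun := fun y => ⟨(y.1, y.2), y.1.2, y.2.2⟩
      left_inv := fun _ => rfl
      right_inv := fun _ => rfl }
  have hfib (a : {a // S a}) : (Nat.card {b // P a b} : ℝ) = x * Nat.card β := by
    rw [← h a a.2, unifProb, div_mul_cancel₀ _ hβ]
  rw [unifProb, unifProb, Nat.card_congr e, Nat.card_sigma, Nat.cast_sum,
    Finset.sum_congr rfl fun a _ => hfib a, Finset.sum_const, Finset.card_univ,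
    ← Nat.card_eq_fintype_card, nsmul_eq_mul, Nat.card_prod, Nat.cast_mul]
  field_simp

lemma unifProb_fst [Finite α] [Finite β] [Nonempty β] (S : α → Prop) :
    unifProb (fun c : α × β => S c.1) = unifProb S := by
  have h := unifProb_prod_of_forall (S := S) (β := β) (P := fun _ _ => True) (x := 1)
    fun _ _ => unifProb_of_forall fun _ => trivial
  simpa only [and_true, mul_one] using h

lemma unifProb_prod_and [Finite α] [Finite β] (S : α → Prop) (S' : β → Prop) :
    unifProb (fun c : α × β => S c.1 ∧ S' c.2) = unifProb S * unifProb S' :=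
  unifProb_prod_of_forall (P := fun _ => S') fun _ _ => rfl

lemma unifProb_pi {ι : Type*} [Fintype ι] {α : ι → Type*} (P : ∀ i, α i → Prop) :
    unifProb (fun v : ∀ i, α i => ∀ i, P i (v i)) = ∏ i, unifProb (P i) := by
  rw [unifProb, Nat.card_congr Equiv.subtypePiEquivPi, Nat.card_pi, Nat.card_pi, Nat.cast_prod,
    Nat.cast_prod, ← Finset.prod_div_distrib]
  rfl

lemma unifProb_comp_addMonoidHom {G H : Type*} [AddGroup G] [AddGroup H] [Finite G]
    {f : G →+ H} (hf : Function.Surjective f) (Q : H → Prop) :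
    unifProb (fun g => Q (f g)) = unifProb Q := by
  have : Finite H := Finite.of_surjective f hf
  let e : G ≃ H × f.ker := (Equiv.sigmaFiberEquiv f).symm.trans
    ((Equiv.sigmaCongrRight fun h => AddMonoidHom.fiberEquivKerOfSurjective hf h).trans
      (Equiv.sigmaEquivProd H f.ker))
  rw [← unifProb_fst (β := f.ker) Q, ← unifProb_comp_equiv e]
  rfl

end UniformProbability

section Elimination

open Matrix

variable {R : Type*} [CommRing R] {ι κ : Type*} {π : R} {d : ι → Prop}

/-- The additive group of symmetric matrices, carrying the uniform distribution of `Psym`. -/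
def symmMatrices (ι R : Type*) [CommRing R] : AddSubgroup (Matrix ι ι R) where
  carrier := {A | A.IsSymm}
  zero_mem' := isSymm_zero
  add_mem' hA hB := hA.add hB
  neg_mem' hA := hA.neg

lemma mem_symmMatrices {A : Matrix ι ι R} : A ∈ symmMatrices ι R ↔ A.IsSymm := Iff.rfl

/-- The symmetric matrices whose rows (hence also columns) indexed by `d` are divisible by `π`:
the shape left over after eliminating some of the rows of a symmetric matrix. -/
def divSym (π : R) (d : ι → Prop) : AddSubgroup (Matrix ι ι R) where
  carrier := {A | A.IsSymm ∧ ∀ i, d i → ∀ j, π ∣ A i j}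
  zero_mem' := ⟨isSymm_zero, fun _ _ _ => dvd_zero π⟩
  add_mem' hA hB := ⟨hA.1.add hB.1, fun i hi j => dvd_add (hA.2 i hi j) (hB.2 i hi j)⟩
  neg_mem' hA := ⟨hA.1.neg, fun i hi j => (hA.2 i hi j).neg_right⟩

lemma mem_divSym {A : Matrix ι ι R} :
    A ∈ divSym π d ↔ A.IsSymm ∧ ∀ i, d i → ∀ j, π ∣ A i j := Iff.rfl

lemma mem_divSym_sumElim_true {A : Matrix (Unit ⊕ ι) (Unit ⊕ ι) R} :
    A ∈ divSym π (Sum.elim (fun _ => True) d) ↔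
      A ∈ divSym π (Sum.elim (fun _ => False) d) ∧ ∀ j, π ∣ A (.inl ()) j := by
  constructor
  · refine fun h => ⟨⟨h.1, ?_⟩, h.2 (.inl ()) trivial⟩
    rintro (_ | i) hi
    exacts [hi.elim, h.2 (.inr i) hi]
  · refine fun h => ⟨h.1.1, ?_⟩
    rintro (_ | i) hi
    exacts [h.2, h.1.2 (.inr i) hi]

/-- `π` divides the entries of a row of an element of `divSym π d` in the columns of `d`. -/
abbrev DivRow (π : R) (d : ι → Prop) : Type _ := ∀ i, {x : R // d i → π ∣ x}

instance (P : Prop) : Inhabited {x : R // P → π ∣ x} := ⟨0, fun _ => dvd_zero π⟩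

lemma reindex_mem_divSym (e : κ ≃ ι) {A : Matrix κ κ R} :
    reindex e e A ∈ divSym π d ↔ A ∈ divSym π (d ∘ e) := by
  refine and_congr ?_ ?_
  · rw [Matrix.IsSymm, Matrix.IsSymm, transpose_reindex, (reindex e e).injective.eq_iff]
  · simp [← e.forall_congr_right]

/-- The symmetric matrix with corner `x`, remaining first row `v` and remaining block `D`. -/
def bordered (x : R) (v : ι → R) (D : Matrix ι ι R) : Matrix (Unit ⊕ ι) (Unit ⊕ ι) R :=
  fromBlocks (of fun _ _ => x) (replicateRow Unit v) (replicateRow Unit v)ᵀ D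

/-- A matrix bordering an element of `divSym π d`, as its corner, first row and large block. -/
def divSymBorderedEquiv (π : R) (d : ι → Prop) :
    divSym π (Sum.elim (fun _ : Unit => False) d) ≃ (R × DivRow π d) × divSym π d where
  toFun A := ((A.1 (.inl ()) (.inl ()), fun j => ⟨A.1 (.inl ()) (.inr j), fun hj => by
      rw [← A.2.1.apply]; exact A.2.2 (.inr j) hj _⟩),
    ⟨A.1.toBlocks₂₂, A.2.1.submatrix Sum.inr, fun i hi j => A.2.2 (.inr i) hi (.inr j)⟩)
  invFun c := ⟨bordered c.1.1 (fun j => c.1.2 j) c.2.1, by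
    refine ⟨IsSymm.fromBlocks (by ext; rfl) rfl c.2.2.1, ?_⟩
    rintro (_ | i) hi (_ | j)
    exacts [hi.elim, hi.elim, (c.1.2 i).2 hi, c.2.2.2 i hi j]⟩
  left_inv A := Subtype.ext <| by
    ext (_ | i) (_ | j)
    exacts [rfl, rfl, A.2.1.apply _ _, rfl]
  right_inv c := rfl

variable [Fintype ι] [DecidableEq ι] [Fintype κ] [DecidableEq κ]

/-- The probability that a uniformly distributed element of `divSym π d` has nonzero
determinant. -/
noncomputable def nonsingProb (π : R) (d : ι → Prop) : ℝ :=
  unifProb fun A : divSym π d => A.1.det ≠ 0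

lemma nonsingProb_comp_equiv (π : R) (d : ι → Prop) (e : κ ≃ ι) :
    nonsingProb π (d ∘ e) = nonsingProb π d := by
  rw [nonsingProb, nonsingProb, ← unifProb_comp_equiv
    ((reindex e e).subtypeEquiv fun _ => (reindex_mem_divSym e).symm)]
  simp

/-- Translating by the Schur complement correction `Bᵀ M⁻¹ B` permutes `divSym π d`. -/
lemma unifProb_fromBlocks_det_ne_zero {M : Matrix κ κ R} (hM : M.IsSymm) (hdet : IsUnit M.det)
    {B : Matrix κ ι R} (hB : ∀ j, d j → ∀ i, π ∣ B i j) :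
    unifProb (fun D : divSym π d => (fromBlocks M B Bᵀ D.1).det ≠ 0) = nonsingProb π d := by
  let _ := M.invertibleOfIsUnitDet hdet
  have hS : Bᵀ * ⅟M * B ∈ divSym π d := by
    refine ⟨?_, fun i hi j => ?_⟩
    · have hinv : (⅟M)ᵀ = ⅟M := by
        rw [invOf_eq_nonsing_inv, transpose_nonsing_inv, hM.eq]
      simp only [Matrix.IsSymm, transpose_mul, transpose_transpose, hinv, Matrix.mul_assoc]
    · rw [Matrix.mul_assoc, Matrix.mul_apply]
      exact Finset.dvd_sum fun l _ => (hB i hi l).mul_right _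
  refine Eq.trans ?_ (unifProb_comp_equiv (Equiv.subRight (⟨_, hS⟩ : divSym π d)) _)
  simp [det_fromBlocks₁₁, hdet.mul_right_eq_zero]

lemma unifProb_bordered_of_isUnit {x : R} (hx : IsUnit x) {v : ι → R} (hv : ∀ j, d j → π ∣ v j) :
    unifProb (fun D : divSym π d => (bordered x v D.1).det ≠ 0) = nonsingProb π d :=
  unifProb_fromBlocks_det_ne_zero (by ext; rfl) (by simpa using hx) fun j hj _ => hv j hj

/-- The symmetric `2 × 2` pivot is invertible because its off-diagonal entry is. -/
lemma unifProb_bordered_bordered (hπ : ∀ x, IsUnit x ↔ ¬ π ∣ x) {x b y : R} (hx : π ∣ x)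
    (hb : IsUnit b) {v w : ι → R} (hv : ∀ j, d j → π ∣ v j) (hw : ∀ j, d j → π ∣ w j) :
    unifProb (fun E : divSym π d =>
      (bordered x (Sum.elim (fun _ => b) v) (bordered y w E.1)).det ≠ 0) = nonsingProb π d := by
  let M : Matrix (Fin 2) (Fin 2) R := !![x, b; b, y]
  let B : Matrix (Fin 2) ι R := of ![v, w]
  let e : Fin 2 ⊕ ι ≃ Unit ⊕ Unit ⊕ ι :=
    ((finTwoEquiv.trans Equiv.boolEquivPUnitSumPUnit).sumCongr (Equiv.refl ι)).trans
      (Equiv.sumAssoc Unit Unit ι)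
  have hM : M.IsSymm := by
    ext i j
    fin_cases i <;> fin_cases j <;> rfl
  have hdet : IsUnit M.det := by
    rw [det_fin_two_of, hπ, dvd_sub_right (hx.mul_right y), ← hπ]
    exact hb.mul hb
  have hB : ∀ j, d j → ∀ i, π ∣ B i j := fun j hj => Fin.forall_fin_two.2 ⟨hv j hj, hw j hj⟩
  have hblocks (E : Matrix ι ι R) : (bordered x (Sum.elim (fun _ => b) v)
      (bordered y w E)).submatrix e e = fromBlocks M B Bᵀ E := by
    ext (i | i) (j | j)
    · fin_cases i <;> fin_cases j <;> rfl
    · fin_cases i <;> rfl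
    · fin_cases j <;> rfl
    · rfl
  simp only [← unifProb_fromBlocks_det_ne_zero hM hdet hB, ← hblocks, det_submatrix_equiv_self]

lemma unifProb_bordered_comp_equiv (e : κ ≃ ι) (x : R) (v : ι → R) :
    unifProb (fun D : divSym π (d ∘ e) => (bordered x (v ∘ e) D.1).det ≠ 0) =
      unifProb fun D : divSym π d => (bordered x v D.1).det ≠ 0 := by
  rw [← unifProb_comp_equiv ((reindex e e).subtypeEquiv fun _ => (reindex_mem_divSym e).symm)]
  congr 1
  ext D
  rw [← det_submatrix_equiv_self ((Equiv.refl Unit).sumCongr e)]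
  congr! 2
  ext (i | i) (j | j) <;> simp [bordered]

lemma unifProb_bordered_of_isUnit_apply [Finite R] (hπ : ∀ x, IsUnit x ↔ ¬ π ∣ x)
    {d' : κ → Prop} (e : Unit ⊕ κ ≃ ι) (he : d ∘ e = Sum.elim (fun _ => False) d') {x : R}
    (hx : π ∣ x) {v : ι → R} (hb : IsUnit (v (e (.inl ())))) (hv : ∀ j, d j → π ∣ v j) :
    unifProb (fun D : divSym π d => (bordered x v D.1).det ≠ 0) = nonsingProb π d' := by
  have hd (j : κ) : d (e (.inr j)) ↔ d' j := iff_of_eq (congrFun he (.inr j))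
  have h := unifProb_prod_of_forall (S := fun _ => True) fun (c : R × DivRow π d') _ =>
    unifProb_bordered_bordered hπ hx hb (y := c.1) (v := v ∘ e ∘ Sum.inr)
      (fun j hj => hv _ ((hd j).2 hj)) fun j => (c.2 j).2
  rw [unifProb_of_forall fun _ => trivial, one_mul] at h
  rw [← h, ← unifProb_bordered_comp_equiv e, he, ← Sum.elim_comp_inl_inr (v ∘ e),
    ← unifProb_comp_equiv (divSymBorderedEquiv π d').symm]
  simp only [true_and]
  rfl

/-- The probability that a uniformly distributed matrix bordering an element of `divSym π d`
has a first row satisfying `S` and nonzero determinant. -/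
noncomputable def borderedProb (π : R) (d : ι → Prop) (S : R × DivRow π d → Prop) : ℝ :=
  unifProb fun c : (R × DivRow π d) × divSym π d =>
    S c.1 ∧ (bordered c.1.1 (fun j => c.1.2 j) c.2.1).det ≠ 0

lemma borderedProb_eq_add [Finite R] (S S' : R × DivRow π d → Prop) :
    borderedProb π d S =
      borderedProb π d (fun c => S c ∧ S' c) + borderedProb π d (fun c => S c ∧ ¬ S' c) := by
  simp only [borderedProb, and_comm (a := S _), and_assoc]
  exact (unifProb_and_add_and_not (fun c : (R × DivRow π d) × divSym π d => S' c.1) _).symm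

lemma borderedProb_true :
    borderedProb π d (fun _ => True) = nonsingProb π (Sum.elim (fun _ : Unit => False) d) := by
  rw [nonsingProb, ← unifProb_comp_equiv (divSymBorderedEquiv π d).symm, borderedProb]
  simp only [true_and]
  rfl

lemma borderedProb_eq_mul [Finite R] {S : R × DivRow π d → Prop} {y : ℝ}
    (h : ∀ c, S c → unifProb (fun D : divSym π d =>
      (bordered c.1 (fun j => c.2 j) D.1).det ≠ 0) = y) :
    borderedProb π d S = unifProb S * y := by
  rw [borderedProb, ← unifProb_prod_of_forall h]

lemma borderedProb_isUnit [Finite R] :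
    borderedProb π d (fun c => IsUnit c.1) = unifProb (IsUnit (M := R)) * nonsingProb π d := by
  rw [← unifProb_fst (β := DivRow π d) (IsUnit (M := R))]
  exact borderedProb_eq_mul fun c hc => unifProb_bordered_of_isUnit hc fun j => (c.2 j).2

lemma borderedProb_dvd [Finite R] :
    borderedProb π d (fun c => π ∣ c.1 ∧ ∀ j, π ∣ (c.2 j).1) =
      unifProb (π ∣ ·) * unifProb (fun v : DivRow π d => ∀ j, π ∣ (v j).1) *
        nonsingProb π (Sum.elim (fun _ : Unit => True) d) := by
  let S : R × DivRow π d → Prop := fun c => π ∣ c.1 ∧ ∀ j, π ∣ (c.2 j).1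
  have hS : unifProb S = unifProb (π ∣ ·) * unifProb (fun v : DivRow π d => ∀ j, π ∣ (v j).1) :=
    unifProb_prod_and (π ∣ ·) fun v : DivRow π d => ∀ j, π ∣ (v j).1
  let e : {c : (R × DivRow π d) × divSym π d // S c.1} ≃
      divSym π (Sum.elim (fun _ : Unit => True) d) :=
    ((divSymBorderedEquiv π d).symm.subtypeEquiv fun c => by
      rw [Sum.forall, Unique.forall_iff]; rfl).trans
    ((Equiv.subtypeSubtypeEquivSubtypeInter (α := Matrix (Unit ⊕ ι) (Unit ⊕ ι) R) _
      fun A => ∀ j, π ∣ A (.inl ()) j).trans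
      (Equiv.subtypeEquivRight fun A => mem_divSym_sumElim_true.symm))
  refine (unifProb_and_eq_mul (fun c : (R × DivRow π d) × divSym π d => S c.1) _).trans ?_
  rw [unifProb_fst, hS, nonsingProb, ← unifProb_comp_equiv e]
  rfl

/-- The divisibility pattern for matrices of size `r + m` whose first `r` rows are divisible. -/
abbrev leftPattern (r m : ℕ) : Fin r ⊕ Fin m → Prop := fun i => i.isLeft

/-- The probability of a nonzero determinant for symmetric matrices of size `r + m` whose first
`r` rows are divisible by `π`. -/
noncomputable def patternProb (π : R) (r m : ℕ) : ℝ := nonsingProb π (leftPattern r m)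

/-- The equivalence moving the index `j` of the second summand to the front. -/
def borderIndexEquiv (r : ℕ) {m : ℕ} (j : Fin (m + 1)) :
    Unit ⊕ (Fin r ⊕ Fin m) ≃ Fin r ⊕ Fin (m + 1) :=
  (Equiv.sumAssoc _ _ _).symm.trans <| ((Equiv.sumComm _ _).sumCongr (Equiv.refl _)).trans <|
    (Equiv.sumAssoc _ _ _).trans <| (Equiv.refl _).sumCongr <| (Equiv.sumComm _ _).trans <|
      (Equiv.optionEquivSumPUnit _).symm.trans (finSuccEquiv' j).symm

lemma borderIndexEquiv_inl (r : ℕ) {m : ℕ} (j : Fin (m + 1)) :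
    borderIndexEquiv r j (.inl ()) = .inr j := by
  simp [borderIndexEquiv]

lemma leftPattern_comp_borderIndexEquiv (r : ℕ) {m : ℕ} (j : Fin (m + 1)) :
    leftPattern r (m + 1) ∘ borderIndexEquiv r j =
      Sum.elim (fun _ => False) (leftPattern r m) := by
  ext (_ | _ | _) <;> simp [borderIndexEquiv]

lemma nonsingProb_sumElim_false_leftPattern (π : R) (r m : ℕ) :
    nonsingProb π (Sum.elim (fun _ : Unit => False) (leftPattern r m)) =
      patternProb π r (m + 1) := by
  rw [← leftPattern_comp_borderIndexEquiv r 0, nonsingProb_comp_equiv, patternProb]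

lemma nonsingProb_sumElim_true_leftPattern (π : R) (r m : ℕ) :
    nonsingProb π (Sum.elim (fun _ : Unit => True) (leftPattern r m)) =
      patternProb π (r + 1) m := by
  let e : Unit ⊕ (Fin r ⊕ Fin m) ≃ Fin (r + 1) ⊕ Fin m :=
    (Equiv.sumAssoc _ _ _).symm.trans <| Equiv.sumCongr ((Equiv.sumComm _ _).trans <|
      (Equiv.optionEquivSumPUnit _).symm.trans (finSuccEquiv r).symm) (Equiv.refl _)
  rw [patternProb, ← nonsingProb_comp_equiv π _ e]
  congr 1
  ext (_ | _ | _) <;> simp [e, leftPattern]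

variable [Finite R] {q : ℝ}

lemma unifProb_divRow_leftPattern (hq : unifProb (fun x : R => π ∣ x) = q) (r m : ℕ) :
    unifProb (fun v : DivRow π (leftPattern r m) => ∀ j, π ∣ (v j).1) = q ^ m := by
  have hleft (i : Fin r) :
      unifProb (fun x : {x : R // leftPattern r m (.inl i) → π ∣ x} => π ∣ x.1) = 1 :=
    unifProb_of_forall fun x => x.2 rfl
  have hright (i : Fin m) :
      unifProb (fun x : {x : R // leftPattern r m (.inr i) → π ∣ x} => π ∣ x.1) = q :=
    (unifProb_comp_equiv (Equiv.subtypeUnivEquiv fun _ h => nomatch h) (π ∣ ·)).trans hq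
  rw [unifProb_pi fun j (x : {x : R // leftPattern r m j → π ∣ x}) => π ∣ x.1,
    Fintype.prod_sum_type]
  simp only [hleft, hright, Finset.prod_const_one, one_mul, Finset.prod_const, Finset.card_univ,
    Fintype.card_fin]

lemma borderedProb_dvd_not_forall (hπ : ∀ x, IsUnit x ↔ ¬ π ∣ x)
    (hq : unifProb (fun x : R => π ∣ x) = q) (r m : ℕ) :
    borderedProb π (leftPattern r m) (fun c => π ∣ c.1 ∧ ¬ ∀ j, π ∣ (c.2 j).1) =
      q * (1 - q ^ m) * patternProb π r (m - 1) := by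
  have hS : unifProb (fun c : R × DivRow π (leftPattern r m) =>
      π ∣ c.1 ∧ ¬ ∀ j, π ∣ (c.2 j).1) = q * (1 - q ^ m) := by
    rw [← unifProb_divRow_leftPattern hq r m, ← unifProb_not, ← hq]
    exact unifProb_prod_and (π ∣ ·)
      fun v : DivRow π (leftPattern r m) => ¬ ∀ j, π ∣ (v j).1
  rw [← hS]
  refine borderedProb_eq_mul fun c hc => ?_
  obtain ⟨i | j, hj⟩ := not_forall.1 hc.2
  · exact absurd ((c.2 (.inl i)).2 rfl) hj
  · obtain ⟨m, rfl⟩ := Nat.exists_eq_succ_of_ne_zero (Fin.pos j).ne'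
    exact unifProb_bordered_of_isUnit_apply hπ (borderIndexEquiv r j)
      (leftPattern_comp_borderIndexEquiv r j) hc.1 (by rwa [borderIndexEquiv_inl, hπ])
      fun j => (c.2 j).2

/-- Eliminate the first row not known to be divisible by `π`: the pivot is its diagonal entry, or
else a `2 × 2` block containing a unit of the row, unless the whole row is divisible by `π`. -/
lemma patternProb_succ_right (hπ : ∀ x, IsUnit x ↔ ¬ π ∣ x)
    (hq : unifProb (fun x : R => π ∣ x) = q) (r m : ℕ) :
    patternProb π r (m + 1) = (1 - q) * patternProb π r m +
      q * (1 - q ^ m) * patternProb π r (m - 1) + q ^ (m + 1) * patternProb π (r + 1) m := by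
  have hunit : unifProb (IsUnit (M := R)) = 1 - q := by
    rw [← hq, ← unifProb_not, funext fun x => propext (hπ x)]
  have hpivot : borderedProb π (leftPattern r m) (fun c => IsUnit c.1) =
      (1 - q) * patternProb π r m := hunit ▸ borderedProb_isUnit
  have hdvd := borderedProb_dvd (π := π) (d := leftPattern r m)
  rw [hq, unifProb_divRow_leftPattern hq, nonsingProb_sumElim_true_leftPattern] at hdvd
  rw [← nonsingProb_sumElim_false_leftPattern, ← borderedProb_true,
    borderedProb_eq_add _ fun c => IsUnit c.1]
  simp only [true_and]
  rw [hpivot]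
  simp only [hπ, not_not]
  rw [borderedProb_eq_add _ fun c => ∀ j, π ∣ (c.2 j).1, hdvd,
    borderedProb_dvd_not_forall hπ hq]
  ring

end Elimination

section SymmetricMatrices

open Matrix Function

variable {R S : Type*} [CommRing R] [CommRing S] {ι : Type*}

lemma card_symmMatrices (n : ℕ) :
    Nat.card (symmMatrices (Fin n) R) = Nat.card R ^ (n * (n + 1) / 2) := by
  have hexp : n * (n + 1) / 2 = Nat.card (Sym2 (Fin n)) := by
    rw [Nat.card_eq_fintype_card, Sym2.card, Fintype.card_fin, Nat.choose_two_right,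
      Nat.add_sub_cancel, mul_comm]
  rw [hexp, ← Nat.card_fun]
  exact Nat.card_congr
    { toFun := fun A => Sym2.lift ⟨A.1, fun i j => A.2.apply j i⟩
      invFun := fun f => ⟨of fun i j => f s(i, j), by
        rw [mem_symmMatrices]; ext i j; simp [Sym2.eq_swap]⟩
      left_inv := fun A => rfl
      right_inv := fun f => by
        ext x
        induction x with | _ i j => rfl }

lemma unifProb_symmMatrices_map [Finite ι] [Finite R] {φ : R →+* S} (hφ : Surjective φ)
    (P : Matrix ι ι S → Prop) :
    unifProb (fun A : symmMatrices ι R => P (A.1.map φ)) =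
      unifProb fun A : symmMatrices ι S => P A.1 := by
  let f : symmMatrices ι R →+ symmMatrices ι S :=
    (φ.toAddMonoidHom.mapMatrix.comp (symmMatrices ι R).subtype).codRestrict _ fun A => A.2.map φ
  refine unifProb_comp_addMonoidHom (f := f) (fun B => ?_) fun A => P A.1
  refine ⟨⟨B.1.map (surjInv hφ), B.2.map _⟩, Subtype.ext ?_⟩
  ext i j
  exact surjInv_eq hφ _

lemma unifProb_symmMatrices_smul [Finite ι] [Finite R] (π : R) (P : Matrix ι ι R → Prop) :
    unifProb (fun A : symmMatrices ι R => P (π • A.1)) =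
      unifProb fun A : divSym π (fun _ : ι => True) => P A.1 := by
  let f : symmMatrices ι R →+ divSym π (fun _ : ι => True) :=
    ((DistribSMul.toAddMonoidHom _ π).comp (symmMatrices ι R).subtype).codRestrict _
      fun A => ⟨A.2.smul π, fun i _ j => dvd_mul_right π (A.1 i j)⟩
  refine unifProb_comp_addMonoidHom (f := f) (fun B => ?_) fun A => P A.1
  have hdiv (x : R) : ∃ y, π ∣ x → x = π * y := by
    by_cases hx : π ∣ x
    · exact hx.imp fun y hy _ => hy
    · exact ⟨0, fun h => absurd h hx⟩
  choose s hs using hdiv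
  refine ⟨⟨B.1.map s, B.2.1.map s⟩, Subtype.ext ?_⟩
  ext i j
  exact (hs _ (B.2.2 i trivial j)).symm

lemma Psym_eq_unifProb (n m : ℕ) [NeZero m] :
    Psym n m = unifProb fun A : symmMatrices (Fin n) (ZMod m) => A.1.det ≠ 0 := by
  have hcard := card_symmMatrices (R := ZMod m) n
  rw [Nat.card_zmod] at hcard
  rw [Psym, Nsym, unifProb, hcard, Nat.cast_pow]
  congr 2
  exact Nat.card_congr (Equiv.subtypeSubtypeEquivSubtypeInter _ _).symm

lemma patternProb_zero_left (π : R) (n : ℕ) :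
    patternProb π 0 n = unifProb fun A : symmMatrices (Fin n) R => A.1.det ≠ 0 := by
  have hpattern : leftPattern 0 n ∘ (Equiv.emptySum (Fin 0) (Fin n)).symm = fun _ => False := by
    ext
    simp
  have hdivSym : divSym π (fun _ : Fin n => False) = symmMatrices (Fin n) R := by
    ext A
    simp [mem_divSym, mem_symmMatrices]
  rw [patternProb, ← nonsingProb_comp_equiv π _ (Equiv.emptySum (Fin 0) (Fin n)).symm, hpattern,
    nonsingProb, hdivSym]

lemma patternProb_zero_right [Finite R] (π : R) (r : ℕ) :
    patternProb π r 0 =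
      unifProb fun A : symmMatrices (Fin r) R => π ^ r * A.1.det ≠ 0 := by
  have hpattern : leftPattern r 0 ∘ (Equiv.sumEmpty (Fin r) (Fin 0)).symm = fun _ => True := by
    ext
    simp [leftPattern]
  rw [patternProb, ← nonsingProb_comp_equiv π _ (Equiv.sumEmpty (Fin r) (Fin 0)).symm, hpattern,
    nonsingProb, ← unifProb_symmMatrices_smul π fun A => A.det ≠ 0]
  simp only [det_smul, Fintype.card_fin]

lemma Psym_one_right (n : ℕ) : Psym n 1 = 0 := by
  have hN : Nsym n 1 = 0 := Nat.card_eq_zero.2 (.inl ⟨fun A => A.2.2 (Subsingleton.elim _ _)⟩)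
  rw [Psym, hN, Nat.cast_zero, zero_div]

lemma Psym_zero_left {m : ℕ} (hm : 1 < m) : Psym 0 m = 1 := by
  have : Fact (1 < m) := ⟨hm⟩
  have : NeZero m := ⟨(zero_lt_one.trans hm).ne'⟩
  rw [Psym_eq_unifProb]
  refine unifProb_of_forall fun A => ?_
  rw [det_fin_zero]
  exact one_ne_zero

end SymmetricMatrices

section ZModPrimePow

variable {p μ : ℕ}

lemma natCast_dvd_iff_castHom_eq_zero {d n : ℕ} [NeZero n] (h : d ∣ n) (x : ZMod n) :
    (d : ZMod n) ∣ x ↔ ZMod.castHom h (ZMod d) x = 0 := by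
  constructor
  · rintro ⟨y, rfl⟩
    rw [map_mul, map_natCast, ZMod.natCast_self, zero_mul]
  · obtain ⟨a, rfl⟩ := ZMod.natCast_zmod_surjective x
    rw [map_natCast, ZMod.natCast_eq_zero_iff]
    exact fun hd => Nat.cast_dvd_cast hd

lemma isUnit_iff_not_natCast_dvd (hp : p.Prime) (hμ : 0 < μ) (x : ZMod (p ^ μ)) :
    IsUnit x ↔ ¬ (p : ZMod (p ^ μ)) ∣ x := by
  have : NeZero (p ^ μ) := ⟨pow_ne_zero _ hp.ne_zero⟩
  rw [natCast_dvd_iff_castHom_eq_zero (dvd_pow_self p hμ.ne')]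
  obtain ⟨a, rfl⟩ := ZMod.natCast_zmod_surjective x
  rw [map_natCast, ZMod.natCast_eq_zero_iff, ZMod.isUnit_natCast_iff_not_dvd_pow hp hμ]

lemma unifProb_natCast_dvd {d n : ℕ} [NeZero n] (h : d ∣ n) :
    unifProb (fun x : ZMod n => (d : ZMod n) ∣ x) = 1 / d := by
  have hpush := unifProb_comp_addMonoidHom (f := (ZMod.castHom h (ZMod d)).toAddMonoidHom)
    (ZMod.castHom_surjective h) (· = 0)
  simp only [natCast_dvd_iff_castHom_eq_zero h]
  refine hpush.trans ?_
  rw [unifProb, Nat.card_zmod, Nat.card_unique, Nat.cast_one]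

lemma natCast_pow_mul_eq_zero_iff (hp : p.Prime) (r : ℕ) (x : ZMod (p ^ μ)) :
    (p : ZMod (p ^ μ)) ^ r * x = 0 ↔
      ZMod.castHom (pow_dvd_pow p (Nat.sub_le μ r)) (ZMod (p ^ (μ - r))) x = 0 := by
  have : NeZero (p ^ μ) := ⟨pow_ne_zero _ hp.ne_zero⟩
  obtain ⟨a, rfl⟩ := ZMod.natCast_zmod_surjective x
  rw [map_natCast, ZMod.natCast_eq_zero_iff, ← Nat.cast_pow, ← Nat.cast_mul,
    ZMod.natCast_eq_zero_iff]
  rcases le_total r μ with hr | hr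
  · conv_lhs => rw [← Nat.add_sub_cancel' hr, pow_add]
    exact Nat.mul_dvd_mul_iff_left (pow_pos hp.pos r)
  · rw [Nat.sub_eq_zero_of_le hr, pow_zero]
    exact iff_of_true ((pow_dvd_pow p hr).mul_right a) (one_dvd a)

lemma patternProb_natCast_zero_left (hp : p.Prime) (n : ℕ) :
    patternProb (p : ZMod (p ^ μ)) 0 n = Psym n (p ^ μ) := by
  have : NeZero (p ^ μ) := ⟨pow_ne_zero _ hp.ne_zero⟩
  rw [patternProb_zero_left, Psym_eq_unifProb]

lemma patternProb_natCast_zero_right (hp : p.Prime) (r : ℕ) :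
    patternProb (p : ZMod (p ^ μ)) r 0 = Psym r (p ^ (μ - r)) := by
  have : NeZero (p ^ μ) := ⟨pow_ne_zero _ hp.ne_zero⟩
  have : NeZero (p ^ (μ - r)) := ⟨pow_ne_zero _ hp.ne_zero⟩
  have hdvd := pow_dvd_pow p (Nat.sub_le μ r)
  rw [patternProb_zero_right, Psym_eq_unifProb,
    ← unifProb_symmMatrices_map (ZMod.castHom_surjective hdvd) fun A => A.det ≠ 0]
  simp only [ne_eq, natCast_pow_mul_eq_zero_iff hp, RingHom.map_det]
  rfl

end ZModPrimePow

section QProducts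

variable {q : ℝ}

lemma PiProd_zero (t : ℝ) : PiProd 0 t = 1 := Finset.prod_range_zero _

lemma PiProd_succ (n : ℕ) (t : ℝ) : PiProd (n + 1) t = PiProd n t * (1 - t ^ (n + 1)) :=
  Finset.prod_range_succ _ _

lemma PiProd_ne_zero {t : ℝ} (ht : ∀ n, 1 - t ^ (n + 1) ≠ 0) (n : ℕ) : PiProd n t ≠ 0 :=
  Finset.prod_ne_zero_iff.2 fun j _ => ht j

lemma one_sub_ne_zero_of_pow (hq : ∀ n, 1 - q ^ (n + 1) ≠ 0) : 1 - q ≠ 0 := by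
  simpa only [zero_add, pow_one] using hq 0

lemma one_sub_sq_pow_ne_zero (hq : ∀ n, 1 - q ^ (n + 1) ≠ 0) (n : ℕ) :
    1 - (q ^ 2) ^ (n + 1) ≠ 0 := by
  rw [← pow_mul]
  exact hq (2 * n + 1)

/-- The Gaussian binomial coefficient, as a polynomial in `Q` evaluated in a semiring. -/
def qBinom {R : Type*} [Semiring R] (Q : R) : ℕ → ℕ → R
  | _, 0 => 1
  | 0, _ + 1 => 0
  | n + 1, k + 1 => qBinom Q n k + Q ^ (k + 1) * qBinom Q n (k + 1)

section CommRing

variable {R : Type*} [CommRing R] (Q : R)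

lemma qBinom_zero_right (n : ℕ) : qBinom Q n 0 = 1 := by
  cases n <;> rfl

lemma qBinom_succ_succ (n k : ℕ) :
    qBinom Q (n + 1) (k + 1) = qBinom Q n k + Q ^ (k + 1) * qBinom Q n (k + 1) := rfl

lemma qBinom_of_lt {n k : ℕ} (h : n < k) : qBinom Q n k = 0 := by
  induction n generalizing k with
  | zero => obtain ⟨k, rfl⟩ := Nat.exists_eq_succ_of_ne_zero h.ne'; rfl
  | succ n ih =>
    obtain ⟨k, rfl⟩ := Nat.exists_eq_succ_of_ne_zero (Nat.ne_zero_of_lt h)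
    rw [qBinom_succ_succ, ih (by lia), ih (by lia), mul_zero, add_zero]

lemma qBinom_self (n : ℕ) : qBinom Q n n = 1 := by
  induction n with
  | zero => rfl
  | succ n ih => rw [qBinom_succ_succ, ih, qBinom_of_lt Q n.lt_succ_self, mul_zero, add_zero]

lemma qBinom_succ_succ' (n k : ℕ) :
    qBinom Q (n + 1) (k + 1) = Q ^ (n - k) * qBinom Q n k + qBinom Q n (k + 1) := by
  induction n generalizing k with
  | zero => cases k <;> simp [qBinom]
  | succ n ih =>
    rcases k with _ | k
    · have hrec (m : ℕ) : qBinom Q (m + 1) 1 = 1 + Q * qBinom Q m 1 := by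
        rw [qBinom_succ_succ, qBinom_zero_right, zero_add, pow_one]
      have hn := ih 0
      simp only [qBinom_zero_right, zero_add, Nat.sub_zero, mul_one] at hn ⊢
      linear_combination hrec (n + 1) + Q * hn - hrec n
    · have hexp : Q ^ (k + 2) * (Q ^ (n - (k + 1)) * qBinom Q n (k + 1)) =
          Q ^ (n - k) * (Q ^ (k + 1) * qBinom Q n (k + 1)) := by
        rcases lt_or_ge n (k + 1) with h | h
        · simp only [qBinom_of_lt Q h, mul_zero]
        · simp only [← mul_assoc, ← pow_add]
          congr 2
          lia
      rw [qBinom_succ_succ, Nat.add_sub_add_right]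
      linear_combination ih k + Q ^ (k + 2) * ih (k + 1) - Q ^ (n - k) * qBinom_succ_succ Q n k -
        qBinom_succ_succ Q n (k + 1) + hexp

lemma sum_qBinom_succ (k : ℕ) (f : ℕ → R) :
    ∑ i ∈ Finset.range (k + 2), qBinom Q (k + 1) i * f i =
      ∑ i ∈ Finset.range (k + 1), qBinom Q k i * (Q ^ i * f i + f (i + 1)) := by
  have hshift : ∑ i ∈ Finset.range (k + 1), qBinom Q k i * (Q ^ i * f i) =
      ∑ i ∈ Finset.range (k + 1), Q ^ (i + 1) * qBinom Q k (i + 1) * f (i + 1) + f 0 := by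
    rw [Finset.sum_range_succ', Finset.sum_range_succ _ k, qBinom_of_lt Q k.lt_succ_self,
      qBinom_zero_right]
    simp only [pow_zero, mul_zero, zero_mul, one_mul, add_zero, mul_left_comm, mul_assoc]
  simp only [mul_add, Finset.sum_add_distrib, hshift]
  rw [Finset.sum_range_succ', qBinom_zero_right, one_mul, add_right_comm]
  simp only [qBinom_succ_succ, add_mul, Finset.sum_add_distrib, add_comm]

lemma sum_qBinom_succ' (k : ℕ) (f : ℕ → R) :
    ∑ i ∈ Finset.range (k + 2), qBinom Q (k + 1) i * f i =
      ∑ i ∈ Finset.range (k + 1), qBinom Q k i * (f i + Q ^ (k - i) * f (i + 1)) := by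
  have hshift : ∑ i ∈ Finset.range (k + 1), qBinom Q k i * f i =
      ∑ i ∈ Finset.range (k + 1), qBinom Q k (i + 1) * f (i + 1) + f 0 := by
    rw [Finset.sum_range_succ', Finset.sum_range_succ _ k, qBinom_of_lt Q k.lt_succ_self,
      qBinom_zero_right, zero_mul, add_zero, one_mul]
  simp only [mul_add, Finset.sum_add_distrib, hshift]
  rw [Finset.sum_range_succ', qBinom_zero_right, one_mul, add_right_comm]
  simp only [qBinom_succ_succ', add_mul, Finset.sum_add_distrib, add_comm, mul_assoc,
    mul_left_comm]

end CommRing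

lemma qBinom_add_mul_PiProd (Q : ℝ) (i e : ℕ) :
    qBinom Q (i + e) i * (PiProd i Q * PiProd e Q) = PiProd (i + e) Q := by
  induction i generalizing e with
  | zero => rw [qBinom_zero_right, zero_add, PiProd_zero, one_mul, one_mul]
  | succ i ihi =>
    induction e with
    | zero => rw [add_zero, qBinom_self, PiProd_zero, one_mul, mul_one]
    | succ e ihe =>
      have hi := ihi (e + 1)
      rw [show i + 1 + e = i + e + 1 by ring] at ihe
      rw [show i + 1 + (e + 1) = i + e + 1 + 1 by ring, show i + (e + 1) = i + e + 1 by ring] at *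
      rw [qBinom_succ_succ, PiProd_succ (i + e + 1)]
      simp only [PiProd_succ i, PiProd_succ e] at *
      linear_combination (1 - Q ^ (i + 1)) * hi + Q ^ (i + 1) * (1 - Q ^ (e + 1)) * ihe

end QProducts

section CorankDistribution

variable {q : ℝ}

/-- The probability that a random symmetric `n × n` matrix over a field with `q⁻¹` elements has
corank `r`. -/
noncomputable def corankProb (q : ℝ) (n r : ℕ) : ℝ :=
  if r ≤ n then q ^ (r * (r + 1) / 2) * PiProd n q / (PiProd r q * PiProd ((n - r) / 2) (q ^ 2))
  else 0

lemma corankProb_of_lt (q : ℝ) {n r : ℕ} (h : n < r) : corankProb q n r = 0 :=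
  if_neg (not_le.2 h)

lemma corankProb_add (q : ℝ) (r δ : ℕ) : corankProb q (r + δ) r =
    q ^ (r * (r + 1) / 2) * PiProd (r + δ) q / PiProd r q * (PiProd (δ / 2) (q ^ 2))⁻¹ := by
  rw [corankProb, if_pos (Nat.le_add_right r δ), Nat.add_sub_cancel_left, ← div_div,
    ← div_eq_mul_inv]

lemma corankProb_self (hq : ∀ n, 1 - q ^ (n + 1) ≠ 0) (n : ℕ) :
    corankProb q n n = q ^ (n * (n + 1) / 2) := by
  have h := corankProb_add q n 0
  rwa [add_zero, Nat.zero_div, PiProd_zero, inv_one, mul_one,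
    mul_div_cancel_right₀ _ (PiProd_ne_zero hq n)] at h

lemma succ_mul_succ_succ_div_two (n : ℕ) :
    (n + 1) * (n + 1 + 1) / 2 = n * (n + 1) / 2 + (n + 1) := by
  rw [show (n + 1) * (n + 1 + 1) = n * (n + 1) + (n + 1) * 2 by ring,
    Nat.add_mul_div_right _ _ two_pos]

/-- The step in the matrix size of the factor of `corankProb` depending on the rank `δ` only. -/
lemma one_sub_pow_mul_inv_PiProd_half (hq : ∀ n, 1 - q ^ (n + 1) ≠ 0) (δ : ℕ) :
    (1 - q ^ (δ + 2)) * (PiProd ((δ + 2) / 2) (q ^ 2))⁻¹ =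
      (1 - q) * (PiProd ((δ + 1) / 2) (q ^ 2))⁻¹ + q * (PiProd (δ / 2) (q ^ 2))⁻¹ := by
  have hq2 := one_sub_sq_pow_ne_zero hq
  obtain ⟨e, rfl | rfl⟩ := Nat.even_or_odd' δ
  · rw [show (2 * e + 2) / 2 = e + 1 by lia, show (2 * e + 1) / 2 = e by lia,
      show 2 * e / 2 = e by lia, PiProd_succ]
    have := PiProd_ne_zero hq2 e
    have := hq2 e
    field_simp
    ring
  · rw [show (2 * e + 1 + 2) / 2 = e + 1 by lia, show (2 * e + 1 + 1) / 2 = e + 1 by lia,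
      show (2 * e + 1) / 2 = e by lia, PiProd_succ]
    have := PiProd_ne_zero hq2 e
    have := hq2 e
    field_simp
    ring

lemma corankProb_succ_zero (hq : ∀ n, 1 - q ^ (n + 1) ≠ 0) (n : ℕ) :
    corankProb q (n + 1) 0 =
      (1 - q) * corankProb q n 0 + q * (1 - q ^ n) * corankProb q (n - 1) 0 := by
  have hzero (δ : ℕ) : corankProb q δ 0 = PiProd δ q * (PiProd (δ / 2) (q ^ 2))⁻¹ := by
    simpa [PiProd_zero] using corankProb_add q 0 δ
  rcases n with _ | n
  · simp [hzero, PiProd_succ, PiProd_zero]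
  · rw [Nat.add_sub_cancel, hzero, hzero, hzero, PiProd_succ (n + 1), PiProd_succ n]
    linear_combination PiProd n q * (1 - q ^ (n + 1)) * one_sub_pow_mul_inv_PiProd_half hq n

lemma corankProb_succ_succ (hq : ∀ n, 1 - q ^ (n + 1) ≠ 0) (n r : ℕ) :
    corankProb q (n + 1) (r + 1) =
      (1 - q) * corankProb q n (r + 1) + q * (1 - q ^ n) * corankProb q (n - 1) (r + 1) +
      q ^ (n + 1) * corankProb q n r := by
  have hr := PiProd_ne_zero hq r
  have hr1 := hq r
  rcases lt_trichotomy n r with h | rfl | h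
  · rw [corankProb_of_lt q (by lia : n + 1 < r + 1), corankProb_of_lt q (by lia : n < r + 1),
      corankProb_of_lt q (by lia : n - 1 < r + 1), corankProb_of_lt q h]
    ring
  · rw [corankProb_of_lt q (by lia : n < n + 1), corankProb_of_lt q (by lia : n - 1 < n + 1),
      corankProb_self hq, corankProb_self hq, succ_mul_succ_succ_div_two]
    ring
  obtain ⟨δ, rfl⟩ := Nat.exists_eq_add_of_lt h
  rcases δ with _ | δ
  · rw [corankProb_of_lt q (by lia : r + 0 + 1 - 1 < r + 1), add_zero, corankProb_self hq,
      corankProb_add, corankProb_add, succ_mul_succ_succ_div_two]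
    simp only [PiProd_succ, Nat.reduceDiv, PiProd_zero]
    field_simp
    ring
  · have hstep := one_sub_pow_mul_inv_PiProd_half hq δ
    rw [show r + (δ + 1) + 1 + 1 = r + 1 + (δ + 2) by ring, corankProb_add,
      show r + (δ + 1) + 1 = r + 1 + (δ + 1) by ring, corankProb_add,
      show r + 1 + (δ + 1) - 1 = r + 1 + δ by lia, corankProb_add,
      show r + 1 + (δ + 1) = r + (δ + 2) by ring, corankProb_add,
      show r + 1 + (δ + 2) = r + 1 + δ + 1 + 1 by ring,
      show r + (δ + 2) = r + 1 + δ + 1 by ring, succ_mul_succ_succ_div_two]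
    simp only [PiProd_succ]
    field_simp
    linear_combination q ^ (r * (r + 1) / 2 + (r + 1)) * PiProd (r + 1 + δ) q *
      (1 - q ^ (r + 1 + δ + 1)) * hstep

lemma eq_sum_corankProb (hq : ∀ n, 1 - q ^ (n + 1) ≠ 0) {Φ : ℕ → ℕ → ℝ}
    (hΦ : ∀ r m, Φ r (m + 1) = (1 - q) * Φ r m + q * (1 - q ^ m) * Φ r (m - 1) +
      q ^ (m + 1) * Φ (r + 1) m) {m M : ℕ} (hM : m < M) (r : ℕ) :
    Φ r m = ∑ j ∈ Finset.range M, corankProb q m j * Φ (r + j) 0 := by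
  induction m using Nat.strong_induction_on generalizing r M with
  | _ m ih =>
    obtain ⟨M, rfl⟩ := Nat.exists_eq_succ_of_ne_zero (Nat.ne_zero_of_lt hM)
    rcases m with _ | m
    · rw [Finset.sum_eq_single 0 (fun j _ hj => by
        rw [corankProb_of_lt q (Nat.pos_of_ne_zero hj), zero_mul]) (by simp), corankProb_self hq,
        zero_mul, Nat.zero_div, pow_zero, one_mul, add_zero]
    · rw [hΦ, ih m (by lia) (M := M + 1) (by lia), ih (m - 1) (by lia) (M := M + 1) (by lia),
        ih m (by lia) (M := M) (by lia), Finset.sum_range_succ', Finset.sum_range_succ',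
        Finset.sum_range_succ', corankProb_succ_zero hq]
      simp only [corankProb_succ_succ hq, add_mul, Finset.sum_add_distrib, mul_add,
        Finset.mul_sum, mul_assoc, add_assoc, add_comm 1]
      ring

end CorankDistribution

section CorankRecurrence

variable {q : ℝ}

/-- The probability that a random symmetric matrix of size `2 * k + 1` over a field with `q⁻¹`
elements has corank `2 * i` or `2 * i + 1`, for `i ≤ k`. -/
noncomputable def corankPairProb (q : ℝ) (k i : ℕ) : ℝ :=
  q ^ (i * (2 * i + 1)) * PiProd (2 * k + 1) q / (PiProd (2 * i + 1) q * PiProd (k - i) (q ^ 2))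

lemma two_mul_mul_succ_div_two (i : ℕ) : 2 * i * (2 * i + 1) / 2 = i * (2 * i + 1) := by
  rw [mul_assoc, Nat.mul_div_cancel_left _ two_pos]

lemma corankProb_odd_even (hq : ∀ n, 1 - q ^ (n + 1) ≠ 0) {k i : ℕ} (hik : i ≤ k) :
    corankProb q (2 * k + 1) (2 * i) = (1 - q ^ (2 * i + 1)) * corankPairProb q k i := by
  obtain ⟨e, rfl⟩ := Nat.exists_eq_add_of_le hik
  have hi := hq (2 * i)
  rw [show 2 * (i + e) + 1 = 2 * i + (2 * e + 1) by ring, corankProb_add, corankPairProb,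
    show (2 * e + 1) / 2 = e by lia, Nat.add_sub_cancel_left, two_mul_mul_succ_div_two,
    PiProd_succ (2 * i), show 2 * (i + e) + 1 = 2 * i + (2 * e + 1) by ring]
  field_simp

lemma corankProb_odd_odd {k i : ℕ} (hik : i ≤ k) :
    corankProb q (2 * k + 1) (2 * i + 1) = q ^ (2 * i + 1) * corankPairProb q k i := by
  obtain ⟨e, rfl⟩ := Nat.exists_eq_add_of_le hik
  rw [show 2 * (i + e) + 1 = 2 * i + 1 + 2 * e by ring, corankProb_add, corankPairProb,
    Nat.mul_div_cancel_left _ two_pos, Nat.add_sub_cancel_left, succ_mul_succ_succ_div_two,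
    two_mul_mul_succ_div_two, show 2 * (i + e) + 1 = 2 * i + 1 + 2 * e by ring]
  ring

lemma corankProb_even_even (hq : ∀ n, 1 - q ^ (n + 1) ≠ 0) {k i : ℕ} (hik : i ≤ k) :
    (1 - q ^ (2 * k + 1)) * corankProb q (2 * k) (2 * i) =
      (1 - q ^ (2 * i + 1)) * corankPairProb q k i := by
  obtain ⟨e, rfl⟩ := Nat.exists_eq_add_of_le hik
  have hi := hq (2 * i)
  rw [show corankProb q (2 * (i + e)) (2 * i) = corankProb q (2 * i + 2 * e) (2 * i) by
    rw [mul_add], corankProb_add, corankPairProb, Nat.mul_div_cancel_left _ two_pos,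
    Nat.add_sub_cancel_left, two_mul_mul_succ_div_two, PiProd_succ (2 * i),
    PiProd_succ (2 * (i + e)), mul_add]
  field_simp

lemma corankProb_even_odd (hq : ∀ n, 1 - q ^ (n + 1) ≠ 0) {k i : ℕ} (hik : i ≤ k) :
    (1 - q ^ (2 * k + 1)) * corankProb q (2 * k) (2 * i + 1) =
      (q ^ (2 * i + 1) - q ^ (2 * k + 1)) * corankPairProb q k i := by
  obtain ⟨e, rfl⟩ := Nat.exists_eq_add_of_le hik
  rcases e with _ | e
  · rw [add_zero, corankProb_of_lt q (2 * i).lt_succ_self, sub_self, zero_mul, mul_zero]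
  have he := one_sub_sq_pow_ne_zero hq e
  rw [show corankProb q (2 * (i + (e + 1))) (2 * i + 1) =
    corankProb q (2 * i + 1 + (2 * e + 1)) (2 * i + 1) by congr 1; ring, corankProb_add,
    corankPairProb, show (2 * e + 1) / 2 = e by lia, Nat.add_sub_cancel_left,
    succ_mul_succ_succ_div_two, two_mul_mul_succ_div_two, PiProd_succ e,
    PiProd_succ (2 * (i + (e + 1))), show 2 * i + 1 + (2 * e + 1) = 2 * (i + (e + 1)) by ring]
  field_simp
  ring

lemma sum_range_two_mul {M : Type*} [AddCommMonoid M] (f : ℕ → M) (n : ℕ) :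
    ∑ j ∈ Finset.range (2 * n), f j = ∑ i ∈ Finset.range n, (f (2 * i) + f (2 * i + 1)) := by
  induction n with
  | zero => rfl
  | succ n ih => rw [Nat.mul_succ, Finset.sum_range_succ, Finset.sum_range_succ, ih,
      Finset.sum_range_succ, add_assoc]

/-- The recurrence of the probabilities `a n μ` that a random symmetric `n × n` matrix has nonzero
determinant modulo `p ^ μ`: a corank `j` modulo `p` leaves a random symmetric `j × j` matrix,
multiplied by `p`, so that `μ` drops by `j`; truncated at `0`. -/
def IsCorankAverage (q : ℝ) (a : ℕ → ℕ → ℝ) : Prop :=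
  ∀ n μ, a n μ = ∑ j ∈ Finset.range (n + 1), corankProb q n j * a j (μ - j)

variable {a : ℕ → ℕ → ℝ}

lemma IsCorankAverage.odd_eq_sum_pairs (ha : IsCorankAverage q a)
    (hq : ∀ n, 1 - q ^ (n + 1) ≠ 0) (k μ : ℕ) :
    a (2 * k + 1) μ = ∑ i ∈ Finset.range (k + 1), corankPairProb q k i *
      ((1 - q ^ (2 * i + 1)) * a (2 * i) (μ - 2 * i) +
        q ^ (2 * i + 1) * a (2 * i + 1) (μ - (2 * i + 1))) := by
  rw [ha, show 2 * k + 1 + 1 = 2 * (k + 1) by ring, sum_range_two_mul]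
  refine Finset.sum_congr rfl fun i hi => ?_
  have hik : i ≤ k := Finset.mem_range_succ_iff.1 hi
  rw [corankProb_odd_even hq hik, corankProb_odd_odd hik]
  ring

lemma IsCorankAverage.even_eq_sum_pairs (ha : IsCorankAverage q a)
    (hq : ∀ n, 1 - q ^ (n + 1) ≠ 0) (k μ : ℕ) :
    (1 - q ^ (2 * k + 1)) * a (2 * k) μ = ∑ i ∈ Finset.range (k + 1), corankPairProb q k i *
      ((1 - q ^ (2 * i + 1)) * a (2 * i) (μ - 2 * i) +
        (q ^ (2 * i + 1) - q ^ (2 * k + 1)) * a (2 * i + 1) (μ - (2 * i + 1))) := by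
  have hext : a (2 * k) μ =
      ∑ j ∈ Finset.range (2 * (k + 1)), corankProb q (2 * k) j * a j (μ - j) := by
    rw [ha, Nat.mul_succ, Finset.sum_range_succ _ (2 * k + 1),
      corankProb_of_lt q (2 * k).lt_succ_self, zero_mul, add_zero]
  rw [hext, sum_range_two_mul, Finset.mul_sum]
  refine Finset.sum_congr rfl fun i hi => ?_
  have hik : i ≤ k := Finset.mem_range_succ_iff.1 hi
  rw [mul_add, ← mul_assoc, ← mul_assoc, corankProb_even_even hq hik, corankProb_even_odd hq hik]
  ring

/-- Subtracting the two previous expansions leaves the assertion at smaller exponents. -/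
lemma IsCorankAverage.odd_eq_odd_pred_add_even (ha : IsCorankAverage q a)
    (hq : ∀ n, 1 - q ^ (n + 1) ≠ 0) (h0 : ∀ n, a n 0 = 0) (k μ : ℕ) :
    a (2 * k + 1) μ =
      q ^ (2 * k + 1) * a (2 * k + 1) (μ - 1) + (1 - q ^ (2 * k + 1)) * a (2 * k) μ := by
  induction μ using Nat.strong_induction_on generalizing k with
  | _ μ ih =>
    rcases μ with _ | μ
    · simp only [h0, Nat.zero_sub, mul_zero, add_zero]
    rw [ha.even_eq_sum_pairs hq, ha.odd_eq_sum_pairs hq k (μ + 1),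
      ha.odd_eq_sum_pairs hq k (μ + 1 - 1), Finset.mul_sum,
      ← Finset.sum_add_distrib]
    refine Finset.sum_congr rfl fun i _ => ?_
    have hi := ih (μ - 2 * i) (by lia) i
    rw [show μ + 1 - 1 - 2 * i = μ - 2 * i by lia,
      show μ + 1 - (2 * i + 1) = μ - 2 * i by lia,
      show μ + 1 - 1 - (2 * i + 1) = μ - 2 * i - 1 by lia]
    linear_combination q ^ (2 * k + 1) * corankPairProb q k i * hi

lemma IsCorankAverage.odd_eq_sum_corankPairProb (ha : IsCorankAverage q a)
    (hq : ∀ n, 1 - q ^ (n + 1) ≠ 0) (h0 : ∀ n, a n 0 = 0) (k μ : ℕ) :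
    a (2 * k + 1) μ =
      ∑ i ∈ Finset.range (k + 1), corankPairProb q k i * a (2 * i + 1) (μ - 2 * i) := by
  rw [ha.odd_eq_sum_pairs hq]
  refine Finset.sum_congr rfl fun i _ => ?_
  rw [ha.odd_eq_odd_pred_add_even hq h0 i (μ - 2 * i), Nat.sub_sub, add_comm]

end CorankRecurrence

section DurfeeRecurrence

variable {R : Type*} [CommRing R] {Q y : R} {d : ℕ} {g : ℕ → ℕ → R}

/-- Both differences `g (k + 1) μ - g k μ` and `g (k + 1) (μ - d)` expand over `qBinom Q k`, by the
two Pascal rules, and the expansions agree termwise by the assertion at smaller exponents. -/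
lemma succ_eq_of_eq_sum_qBinom (hd : 0 < d) (h0 : ∀ k, g k 0 = 0)
    (hg : ∀ k μ, g k μ =
      ∑ i ∈ Finset.range (k + 1), qBinom Q k i * (Q ^ (i * i) * y ^ i * g i (μ - d * i)))
    (k μ : ℕ) : g (k + 1) μ = y * Q ^ (k + 1) * g (k + 1) (μ - d) + g k μ := by
  induction μ using Nat.strong_induction_on generalizing k with
  | _ μ ih =>
    rcases μ.eq_zero_or_pos with rfl | hμ
    · simp only [Nat.zero_sub, h0, mul_zero, add_zero]
    rw [hg (k + 1) μ, hg k μ, hg (k + 1) (μ - d), sum_qBinom_succ', sum_qBinom_succ,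
      Finset.mul_sum, ← Finset.sum_add_distrib]
    refine Finset.sum_congr rfl fun i hi => ?_
    obtain ⟨e, rfl⟩ := Nat.exists_eq_add_of_le (Finset.mem_range_succ_iff.1 hi)
    rw [Nat.add_sub_cancel_left, show μ - d * (i + 1) = μ - d - d * i by rw [mul_add]; lia,
      ih (μ - d - d * i) (by lia) i,
      show μ - d - d * (i + 1) = μ - d - d * i - d by rw [mul_add]; lia]
    ring

end DurfeeRecurrence

section OddSize

variable {q : ℝ}

lemma T_zero_left (q : ℝ) (β s : ℕ) : T q β 0 s = 1 := if_pos rfl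

lemma T_succ_left (q : ℝ) (β k s : ℕ) : T q β (k + 1) s = ∑ j ∈ Finset.range (s + 1),
    q ^ (β * j) * PiProd (k + j) (q ^ 2) / (PiProd j (q ^ 2) * PiProd k (q ^ 2)) := by
  rw [T, if_neg k.succ_ne_zero]
  simp only [Nat.add_sub_cancel, Nat.add_right_comm k 1]

lemma T_zero_right (hq : ∀ n, 1 - q ^ (n + 1) ≠ 0) (β k : ℕ) : T q β k 0 = 1 := by
  rcases k with _ | k
  · exact T_zero_left q β 0
  · rw [T_succ_left, Finset.sum_range_one, mul_zero, pow_zero, one_mul, add_zero, PiProd_zero,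
      one_mul, div_self (PiProd_ne_zero (one_sub_sq_pow_ne_zero hq) k)]

lemma T_one (hq : ∀ n, 1 - q ^ (n + 1) ≠ 0) (β s : ℕ) :
    T q β 1 s = ∑ j ∈ Finset.range (s + 1), q ^ (β * j) := by
  rw [T_succ_left]
  refine Finset.sum_congr rfl fun j _ => ?_
  rw [zero_add, PiProd_zero, mul_one,
    mul_div_cancel_right₀ _ (PiProd_ne_zero (one_sub_sq_pow_ne_zero hq) j)]

lemma T_succ_succ (hq : ∀ n, 1 - q ^ (n + 1) ≠ 0) (β k s : ℕ) :
    T q β (k + 1) (s + 1) = T q β k (s + 1) + q ^ (2 * k + β) * T q β (k + 1) s := by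
  rcases k with _ | k
  · rw [T_one hq, T_one hq, T_zero_left, Finset.sum_range_succ', Finset.mul_sum, mul_zero,
      mul_zero, pow_zero, zero_add, add_comm]
    simp only [Nat.mul_succ, pow_add, mul_comm]
  have hq2 := one_sub_sq_pow_ne_zero hq
  have hne := PiProd_ne_zero hq2
  simp only [T_succ_left]
  rw [Finset.sum_range_succ', Finset.sum_range_succ' _ (s + 1), Finset.mul_sum,
    add_right_comm (Finset.sum _ _), ← Finset.sum_add_distrib]
  congr 1
  · refine Finset.sum_congr rfl fun j _ => ?_
    rw [show k + 1 + (j + 1) = k + j + 1 + 1 by ring, show k + (j + 1) = k + j + 1 by ring,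
      show k + 1 + j = k + j + 1 by ring, PiProd_succ (k + j + 1), PiProd_succ k, PiProd_succ j]
    have := hne k
    have := hne j
    have := hq2 k
    have := hq2 j
    field_simp
    ring
  · simp [PiProd_zero, hne]

/-- The factor `T_3(k,s) - q^μ T_1(k,s)` of the closed form, with `s = ⌊(μ-1)/2⌋`. -/
noncomputable def oddFactor (q : ℝ) (k μ : ℕ) : ℝ :=
  T q 3 k ((μ - 1) / 2) - q ^ μ * T q 1 k ((μ - 1) / 2)

lemma oddFactor_zero_left (q : ℝ) (μ : ℕ) : oddFactor q 0 μ = 1 - q ^ μ := by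
  rw [oddFactor, T_zero_left, T_zero_left, mul_one]

lemma oddFactor_of_lt_two (hq : ∀ n, 1 - q ^ (n + 1) ≠ 0) (k : ℕ) {μ : ℕ} (hμ : μ < 2) :
    oddFactor q k μ = 1 - q ^ μ := by
  rw [oddFactor, show (μ - 1) / 2 = 0 by lia, T_zero_right hq, T_zero_right hq, mul_one]

lemma oddFactor_add_two (hq : ∀ n, 1 - q ^ (n + 1) ≠ 0) (k μ : ℕ) :
    oddFactor q (k + 1) (μ + 2) =
      q ^ (2 * k + 3) * oddFactor q (k + 1) μ + oddFactor q k (μ + 2) := by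
  rcases μ with _ | μ
  · simp [oddFactor, T_zero_right hq]
  · simp only [oddFactor, show (μ + 1 + 2 - 1) / 2 = μ / 2 + 1 by lia, Nat.add_sub_cancel,
      T_succ_succ hq]
    ring

/-- The factor `Π_{2k+1}(q) / ((1 - q) Π_k(q²))` of the closed form. -/
noncomputable def oddLeading (q : ℝ) (k : ℕ) : ℝ :=
  PiProd (2 * k + 1) q / ((1 - q) * PiProd k (q ^ 2))

lemma oddLeading_zero (hq : ∀ n, 1 - q ^ (n + 1) ≠ 0) : oddLeading q 0 = 1 := by
  rw [oddLeading, mul_zero, PiProd_succ, PiProd_zero, PiProd_zero, zero_add, pow_one, one_mul,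
    mul_one, div_self (one_sub_ne_zero_of_pow hq)]

lemma oddLeading_ne_zero (hq : ∀ n, 1 - q ^ (n + 1) ≠ 0) (k : ℕ) : oddLeading q k ≠ 0 :=
  div_ne_zero (PiProd_ne_zero hq _)
    (mul_ne_zero (one_sub_ne_zero_of_pow hq) (PiProd_ne_zero (one_sub_sq_pow_ne_zero hq) k))

lemma corankPairProb_mul_oddLeading (hq : ∀ n, 1 - q ^ (n + 1) ≠ 0) {k i : ℕ} (hik : i ≤ k) :
    corankPairProb q k i * oddLeading q i =
      oddLeading q k * (qBinom (q ^ 2) k i * ((q ^ 2) ^ (i * i) * q ^ i)) := by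
  obtain ⟨e, rfl⟩ := Nat.exists_eq_add_of_le hik
  have hne := PiProd_ne_zero (one_sub_sq_pow_ne_zero hq)
  have hi := hne i
  have he := hne e
  have hodd := PiProd_ne_zero hq (2 * i + 1)
  have hone := one_sub_ne_zero_of_pow hq
  have hbinom : qBinom (q ^ 2) (i + e) i ≠ 0 :=
    left_ne_zero_of_mul ((qBinom_add_mul_PiProd (q ^ 2) i e).trans_ne (hne (i + e)))
  rw [corankPairProb, oddLeading, oddLeading, Nat.add_sub_cancel_left,
    ← qBinom_add_mul_PiProd (q ^ 2) i e]
  field_simp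
  ring

section CorankAverage

variable {a : ℕ → ℕ → ℝ}

lemma IsCorankAverage.one_eq (ha : IsCorankAverage q a) (hq : ∀ n, 1 - q ^ (n + 1) ≠ 0)
    (h0 : ∀ n, a n 0 = 0) (h1 : ∀ μ, a 0 (μ + 1) = 1) (μ : ℕ) : a 1 μ = 1 - q ^ μ := by
  induction μ with
  | zero => rw [h0, pow_zero, sub_self]
  | succ μ ih =>
    have h := ha.odd_eq_odd_pred_add_even hq h0 0 (μ + 1)
    rw [mul_zero, zero_add, pow_one, Nat.add_sub_cancel, h1, ih] at h
    rw [h]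
    ring

lemma IsCorankAverage.div_oddLeading_succ (ha : IsCorankAverage q a)
    (hq : ∀ n, 1 - q ^ (n + 1) ≠ 0) (h0 : ∀ n, a n 0 = 0) (k μ : ℕ) :
    a (2 * (k + 1) + 1) μ / oddLeading q (k + 1) =
      q ^ (2 * k + 3) * (a (2 * (k + 1) + 1) (μ - 2) / oddLeading q (k + 1)) +
        a (2 * k + 1) μ / oddLeading q k := by
  have hL := oddLeading_ne_zero hq
  have h := succ_eq_of_eq_sum_qBinom (Q := q ^ 2) (y := q) two_pos
    (g := fun k μ => a (2 * k + 1) μ / oddLeading q k) (fun k => by rw [h0, zero_div])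
    (fun k μ => ?_) k μ
  · rw [h]
    ring
  · rw [ha.odd_eq_sum_corankPairProb hq h0, div_eq_iff (hL k), Finset.sum_mul]
    refine Finset.sum_congr rfl fun i hi => ?_
    have hc := corankPairProb_mul_oddLeading hq (Finset.mem_range_succ_iff.1 hi)
    have := hL i
    field_simp
    linear_combination a (2 * i + 1) (μ - 2 * i) * hc

lemma IsCorankAverage.odd_eq (ha : IsCorankAverage q a) (hq : ∀ n, 1 - q ^ (n + 1) ≠ 0)
    (h0 : ∀ n, a n 0 = 0) (h1 : ∀ μ, a 0 (μ + 1) = 1) (k μ : ℕ) :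
    a (2 * k + 1) μ = oddLeading q k * oddFactor q k μ := by
  rw [mul_comm (oddLeading q k), ← div_eq_iff (oddLeading_ne_zero hq k)]
  induction k generalizing μ with
  | zero =>
    rw [mul_zero, zero_add, oddLeading_zero hq, div_one, ha.one_eq hq h0 h1, oddFactor_zero_left]
  | succ k ih =>
    induction μ using Nat.twoStepInduction with
    | zero => rw [h0, zero_div, oddFactor_of_lt_two hq _ two_pos, pow_zero, sub_self]
    | one =>
      rw [ha.div_oddLeading_succ hq h0, ih, h0, zero_div, mul_zero, zero_add,
        oddFactor_of_lt_two hq _ one_lt_two, oddFactor_of_lt_two hq _ one_lt_two]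
    | more μ ihμ _ =>
      rw [ha.div_oddLeading_succ hq h0, ih, oddFactor_add_two hq, Nat.add_sub_cancel, ihμ]

end CorankAverage

end OddSize

section PrimePowerModulus

variable {p : ℕ}

lemma one_sub_inv_pow_ne_zero (hp : p.Prime) (n : ℕ) : 1 - (1 / p : ℝ) ^ (n + 1) ≠ 0 := by
  have hp1 : (1 : ℝ) < p := Nat.one_lt_cast.2 hp.one_lt
  have hq0 : (0 : ℝ) ≤ 1 / p := by positivity
  have hq1 : (1 / p : ℝ) < 1 := (div_lt_one (zero_lt_one.trans hp1)).2 hp1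
  exact (sub_pos.2 (pow_lt_one₀ hq0 hq1 n.succ_ne_zero)).ne'

lemma isCorankAverage_Psym (hp : p.Prime) :
    IsCorankAverage (1 / p) fun n μ => Psym n (p ^ μ) := by
  intro n μ
  rcases μ.eq_zero_or_pos with rfl | hμ
  · simp [Psym_one_right]
  have : NeZero (p ^ μ) := ⟨pow_ne_zero _ hp.ne_zero⟩
  have h := eq_sum_corankProb (one_sub_inv_pow_ne_zero hp)
    (patternProb_succ_right (isUnit_iff_not_natCast_dvd hp hμ)
      (unifProb_natCast_dvd (dvd_pow_self p hμ.ne'))) n.lt_succ_self 0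
  simpa only [zero_add, patternProb_natCast_zero_left hp, patternProb_natCast_zero_right hp]
    using h

end PrimePowerModulus

theorem Psym_odd_explicit (p : ℕ) (hp : p.Prime) (q : ℝ) (hq : q = 1 / p)
    (k μ : ℕ) (hμ : 1 ≤ μ) (s : ℕ) (hs : s = (μ - 1) / 2) :
    Psym (2 * k + 1) (p ^ μ) =
      (PiProd (2 * k + 1) q / ((1 - q) * PiProd k (q ^ 2))) *
        (T q 3 k s - q ^ μ * T q 1 k s) := by
  have hzero (n : ℕ) : Psym n (p ^ 0) = 0 := by rw [pow_zero, Psym_one_right]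
  have hempty (ν : ℕ) : Psym 0 (p ^ (ν + 1)) = 1 :=
    Psym_zero_left (Nat.one_lt_pow ν.succ_ne_zero hp.one_lt)
  have hodd := (isCorankAverage_Psym hp).odd_eq (one_sub_inv_pow_ne_zero hp) hzero hempty k μ
  rwa [← hq, oddLeading, oddFactor, ← hs] at hodd
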